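/- arXiv:2405.17014 — 6 statements merged into one kernel-verified Lean document; each statement's English description precedes it below -/
import Mathlib

section
/- Let 0 < g_* ≤ g^*, let g : (0,∞) → (0,∞) be differentiable with g_* ≤ 1 + r g′(r)/g(r) ≤ g^* for all r > 0 and with lim_{r→0⁺} r g(r) = 0, and define h : ℝ → ℝ by h(t) = g(|t|) t for t ≠ 0 and h(0) = 0. Then for all ξ ≠ ζ in ℝ, the function r ↦ g(|θ_r|) + |θ_r| g′(|θ_r|), where θ_r = r ξ + (1 − r) ζ, is integrable on [0,1] and h(ξ) − h(ζ) = (ξ − ζ) ∫₀¹ ( g(|θ_r|) + |θ_r| g′(|θ_r|) ) dr. -/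
/-!
On each side of `0` the function `h(t) = g(|t|) t` has derivative `g(|t|) + |t| g'(|t|)`, which the
growth condition makes nonnegative, and `h` is continuous at `0` because `r g(r) → 0`. A continuous
function whose derivative is nonnegative off a finite set has an integrable derivative, so the
fundamental theorem of calculus holds across `0` even if the derivative is unbounded there; the
substitution `t = θ_r` then gives the formula.
-/

open Set Filter MeasureTheory AffineMap
open scoped Topology Interval

theorem intervalIntegrable_of_hasDerivAt_nonneg_off_finite {f f' : ℝ → ℝ} {s : Set ℝ}
    (hs : s.Finite) {a b : ℝ} (hf : ContinuousOn f [[a, b]])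
    (hf' : ∀ x ∈ Ioo (min a b) (max a b) \ s, HasDerivAt f (f' x) x)
    (hnonneg : ∀ x ∈ Ioo (min a b) (max a b) \ s, 0 ≤ f' x) :
    IntervalIntegrable f' volume a b := by
  induction s, hs using Set.Finite.induction_on generalizing a b with
  | empty =>
    simp only [sdiff_empty] at hf' hnonneg
    exact intervalIntegral.intervalIntegrable_deriv_of_nonneg hf hf' hnonneg
  | @insert c s _ _ ih =>
    have of_notMem {u v : ℝ} (huv : [[u, v]] ⊆ [[a, b]]) (hc : c ∉ Ioo (min u v) (max u v)) :
        IntervalIntegrable f' volume u v := by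
      have hsub : Ioo (min u v) (max u v) \ s ⊆ Ioo (min a b) (max a b) \ insert c s := by
        obtain ⟨hmin, hmax⟩ := uIcc_subset_uIcc_iff_le.mp huv
        rintro x ⟨hx, hxs⟩
        have hxc : x ≠ c := ne_of_mem_of_not_mem hx hc
        exact ⟨Ioo_subset_Ioo hmin hmax hx, not_or_intro hxc hxs⟩
      exact ih (hf.mono huv) (fun x hx => hf' x (hsub hx)) (fun x hx => hnonneg x (hsub hx))
    by_cases hc : c ∈ Ioo (min a b) (max a b)
    · have hcab : c ∈ [[a, b]] := Ioo_subset_Icc_self hc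
      have hac := of_notMem (uIcc_subset_uIcc_left hcab) (by grind)
      have hcb := of_notMem (uIcc_subset_uIcc_right hcab) (by grind)
      exact hac.trans hcb
    · exact of_notMem Subset.rfl hc

section LineMap

variable {E : Type*} [NormedAddCommGroup E]

theorem intervalIntegrable_comp_lineMap {f : ℝ → E} {a b : ℝ}
    (hf : IntervalIntegrable f volume a b) :
    IntervalIntegrable (fun r => f (lineMap a b r)) volume 0 1 := by
  simp only [lineMap_apply_ring']
  obtain rfl | hab := eq_or_ne a b
  · simp
  · simpa [div_self (sub_ne_zero.mpr hab.symm), mul_comm] using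
      (hf.comp_add_right a).comp_mul_left (c := b - a)

theorem sub_smul_integral_comp_lineMap [NormedSpace ℝ E] (f : ℝ → E) (a b : ℝ) :
    (b - a) • ∫ r in (0 : ℝ)..1, f (lineMap a b r) = ∫ x in a..b, f x := by
  simpa [lineMap_apply_ring', mul_comm] using
    intervalIntegral.smul_integral_comp_mul_add (a := 0) (b := 1) f (b - a) a

end LineMap

theorem intervalIntegrable_and_sub_eq_mul_integral_of_hasDerivAt_nonneg_off_finite
    {f f' : ℝ → ℝ} {s : Set ℝ} (hs : s.Finite) {a b : ℝ} (hf : ContinuousOn f [[a, b]])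
    (hf' : ∀ x ∈ Ioo (min a b) (max a b) \ s, HasDerivAt f (f' x) x)
    (hnonneg : ∀ x ∈ Ioo (min a b) (max a b) \ s, 0 ≤ f' x) :
    IntervalIntegrable (fun r => f' (lineMap a b r)) volume 0 1 ∧
      f b - f a = (b - a) * ∫ r in (0 : ℝ)..1, f' (lineMap a b r) := by
  have hint := intervalIntegrable_of_hasDerivAt_nonneg_off_finite hs hf hf' hnonneg
  refine ⟨intervalIntegrable_comp_lineMap hint, ?_⟩
  rw [← smul_eq_mul, sub_smul_integral_comp_lineMap,
    integral_eq_of_hasDerivAt_off_countable f f' hs.countable hf hf' hint]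

theorem continuousAt_norm_smul_zero {E : Type*} [NormedAddCommGroup E] [NormedSpace ℝ E]
    {g : ℝ → ℝ} (hg : Tendsto (fun r => r * g r) (𝓝[>] 0) (𝓝 0)) :
    ContinuousAt (fun x : E => g ‖x‖ • x) 0 := by
  rw [continuousAt_iff_punctured_nhds, smul_zero, tendsto_zero_iff_norm_tendsto_zero]
  have hnorm := (hg.comp (tendsto_norm_nhdsNE_zero (E := E))).norm
  simpa [Function.comp_def, norm_smul, mul_comm] using hnorm

theorem hasDerivAt_comp_abs_mul_self {g : ℝ → ℝ} {g' t : ℝ} (ht : t ≠ 0)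
    (hg : HasDerivAt g g' |t|) :
    HasDerivAt (fun x => g |x| * x) (g |t| + |t| * g') t := by
  refine ((hg.comp t (hasDerivAt_abs ht)).mul (hasDerivAt_id t)).congr_deriv ?_
  calc g' * SignType.sign t * t + g |t| * 1
      = g' * (SignType.sign t * t) + g |t| := by ring
    _ = g |t| + |t| * g' := by rw [sign_mul_self]; ring

theorem continuous_comp_abs_mul_self {g : ℝ → ℝ} (hg : ∀ r, 0 < r → DifferentiableAt ℝ g r)
    (hlim : Tendsto (fun r => r * g r) (𝓝[>] 0) (𝓝 0)) :
    Continuous fun x => g |x| * x := by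
  refine continuous_iff_continuousAt.mpr fun t => ?_
  obtain rfl | ht := eq_or_ne t 0
  · exact continuousAt_norm_smul_zero hlim
  · exact (hasDerivAt_comp_abs_mul_self ht (hg _ (abs_pos.mpr ht)).hasDerivAt).continuousAt

theorem mean_value_representation_general {g g' : ℝ → ℝ}
    (hgderiv : ∀ r : ℝ, 0 < r → HasDerivAt g (g' r) r)
    (hnonneg : ∀ r : ℝ, 0 < r → 0 ≤ g r + r * g' r)
    (hlim : Tendsto (fun r : ℝ => r * g r) (𝓝[>] 0) (𝓝 0))
    {h : ℝ → ℝ} (hh : ∀ t : ℝ, t ≠ 0 → h t = g |t| * t) (hh0 : h 0 = 0) (ξ ζ : ℝ) :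
    IntervalIntegrable
      (fun r : ℝ => g |r * ξ + (1 - r) * ζ| + |r * ξ + (1 - r) * ζ| * g' |r * ξ + (1 - r) * ζ|)
      volume 0 1 ∧
    h ξ - h ζ = (ξ - ζ) *
      ∫ r in (0:ℝ)..1,
        (g |r * ξ + (1 - r) * ζ| + |r * ξ + (1 - r) * ζ| * g' |r * ξ + (1 - r) * ζ|) := by
  obtain rfl : h = fun t => g |t| * t := by
    funext t
    obtain rfl | ht := eq_or_ne t 0
    exacts [by rw [hh0, mul_zero], hh t ht]
  have hθ (r : ℝ) : r * ξ + (1 - r) * ζ = lineMap ζ ξ r := by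
    rw [lineMap_apply_ring, add_comm]
  simp only [hθ]
  exact intervalIntegrable_and_sub_eq_mul_integral_of_hasDerivAt_nonneg_off_finite
    (f' := fun t => g |t| + |t| * g' |t|) (finite_singleton 0)
    (continuous_comp_abs_mul_self (fun r hr => (hgderiv r hr).differentiableAt) hlim).continuousOn
    (fun t ht => hasDerivAt_comp_abs_mul_self ht.2 (hgderiv _ (abs_pos.mpr ht.2)))
    (fun t ht => hnonneg _ (abs_pos.mpr ht.2))

theorem add_mul_nonneg_of_one_add_mul_div_nonneg {x y r : ℝ} (hx : 0 < x)
    (h : 0 ≤ 1 + r * y / x) : 0 ≤ x + r * y := by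
  calc 0 ≤ x * (1 + r * y / x) := mul_nonneg hx.le h
    _ = x + r * y := by rw [mul_add, mul_one, mul_div_cancel₀ _ hx.ne']

/-- Mean-value representation for `h(t) = g(|t|) t` (extended by `h(0) = 0`) along the
segment `θ_r = r ξ + (1-r) ζ`: for `ξ ≠ ζ`, the function
`r ↦ g(|θ_r|) + |θ_r| g'(|θ_r|)` is integrable on `[0,1]` and
`h(ξ) - h(ζ) = (ξ - ζ) ∫₀¹ (g(|θ_r|) + |θ_r| g'(|θ_r|)) dr`. -/
theorem mean_value_representation (gs gS : ℝ) (hgs : 0 < gs) (hgsS : gs ≤ gS)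
    (g g' : ℝ → ℝ)
    (hgpos : ∀ r : ℝ, 0 < r → 0 < g r)
    (hgderiv : ∀ r : ℝ, 0 < r → HasDerivAt g (g' r) r)
    (hlow : ∀ r : ℝ, 0 < r → gs ≤ 1 + r * g' r / g r)
    (hupp : ∀ r : ℝ, 0 < r → 1 + r * g' r / g r ≤ gS)
    (hlim : Filter.Tendsto (fun r : ℝ => r * g r) (nhdsWithin 0 (Set.Ioi 0)) (nhds 0))
    (h : ℝ → ℝ) (hh : ∀ t : ℝ, t ≠ 0 → h t = g |t| * t) (hh0 : h 0 = 0)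
    (ξ ζ : ℝ) (hne : ξ ≠ ζ) :
    IntervalIntegrable
      (fun r : ℝ => g |r * ξ + (1 - r) * ζ| + |r * ξ + (1 - r) * ζ| * g' |r * ξ + (1 - r) * ζ|)
      MeasureTheory.volume 0 1 ∧
    h ξ - h ζ = (ξ - ζ) *
      ∫ r in (0:ℝ)..1,
        (g |r * ξ + (1 - r) * ζ| + |r * ξ + (1 - r) * ζ| * g' |r * ξ + (1 - r) * ζ|) := by
  exact mean_value_representation_general hgderiv
    (fun r hr => add_mul_nonneg_of_one_add_mul_div_nonneg (hgpos r hr) (hgs.le.trans (hlow r hr)))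
    hlim hh hh0 ξ ζ
end

section
/- Let 0 < g_* ≤ g^*, let g : (0,∞) → (0,∞) be differentiable with g_* ≤ 1 + r g′(r)/g(r) ≤ g^* for all r > 0 and with lim_{r→0⁺} r g(r) = 0, and define h : ℝ → ℝ by h(t) = g(|t|) t for t ≠ 0 and h(0) = 0. Then h is strictly increasing on ℝ; equivalently, for all ξ, ζ ∈ ℝ with ξ ≠ ζ one has (h(ξ) − h(ζ)) · (ξ − ζ) > 0. -/
/-!
On `(0, ∞)` the derivative of `g r * r` factors as `g r * (1 + r * g' r / g r)`, a product of two
positive numbers. Since `g r * r` is also positive there, the odd function `g |t| * t`, which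
vanishes at `0`, increases strictly across `0` and hence on the whole line.
-/

open Set

theorem strictMonoOn_mul_id_of_one_add_mul_deriv_div_pos {D : Set ℝ} (hD : Convex ℝ D)
    {g g' : ℝ → ℝ} (hg : ContinuousOn g D) (hgpos : ∀ r ∈ interior D, 0 < g r)
    (hgderiv : ∀ r ∈ interior D, HasDerivAt g (g' r) r)
    (hgrowth : ∀ r ∈ interior D, 0 < 1 + r * g' r / g r) :
    StrictMonoOn (fun r => g r * r) D := by
  refine strictMonoOn_of_deriv_pos hD (hg.mul continuousOn_id) fun r hr => ?_
  have hgr : g r ≠ 0 := (hgpos r hr).ne'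
  have hfactor : g' r * r + g r * 1 = g r * (1 + r * g' r / g r) := by
    field_simp
    ring
  have hderiv : HasDerivAt (fun r => g r * r) (g r * (1 + r * g' r / g r)) r :=
    hfactor ▸ (hgderiv r hr).mul (hasDerivAt_id r)
  rw [hderiv.deriv]
  exact mul_pos (hgpos r hr) (hgrowth r hr)

section LinearOrderedRing

variable {R : Type*} [Ring R] [LinearOrder R] [IsStrictOrderedRing R]

theorem strictMono_abs_mul_of_strictMonoOn_Ioi {g : R → R} (hgpos : ∀ r, 0 < r → 0 < g r)
    (hmono : StrictMonoOn (fun r => g r * r) (Ioi 0)) :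
    StrictMono fun t => g |t| * t := by
  have hodd (t : R) : g |-t| * -t = -(g |t| * t) := by rw [abs_neg, mul_neg]
  have hpos : StrictMonoOn (fun t => g |t| * t) (Ioi 0) :=
    hmono.congr fun t ht => by simp only [abs_of_pos (mem_Ioi.mp ht)]
  have hnonneg : StrictMonoOn (fun t => g |t| * t) (Ici 0) := by
    rw [← Ioi_insert, strictMonoOn_insert_iff_of_forall_ge fun t ht => (mem_Ioi.mp ht).le]
    refine ⟨fun t _ ht => ?_, hpos⟩
    simpa only [mul_zero] using mul_pos (hgpos |t| (abs_pos_of_pos ht)) ht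
  exact strictMono_of_odd_strictMonoOn_nonneg hodd hnonneg

theorem sub_mul_sub_pos_of_strictMono {f : R → R} (hf : StrictMono f) {x y : R} (hxy : x ≠ y) :
    0 < (f x - f y) * (x - y) := by
  rcases hxy.lt_or_gt with hlt | hgt
  · exact mul_pos_of_neg_of_neg (sub_neg.2 (hf hlt)) (sub_neg.2 hlt)
  · exact mul_pos (sub_pos.2 (hf hgt)) (sub_pos.2 hgt)

end LinearOrderedRing

theorem h_strict_monotone_general {g g' : ℝ → ℝ} (hgpos : ∀ r : ℝ, 0 < r → 0 < g r)
    (hgderiv : ∀ r : ℝ, 0 < r → HasDerivAt g (g' r) r)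
    (hgrowth : ∀ r : ℝ, 0 < r → 0 < 1 + r * g' r / g r)
    {h : ℝ → ℝ} (hh : ∀ t : ℝ, t ≠ 0 → h t = g |t| * t) (hh0 : h 0 = 0) :
    StrictMono h ∧ ∀ ξ ζ : ℝ, ξ ≠ ζ → 0 < (h ξ - h ζ) * (ξ - ζ) := by
  have h_eq : h = fun t => g |t| * t := by
    ext t
    rcases eq_or_ne t 0 with rfl | ht
    · rw [hh0, mul_zero]
    · exact hh t ht
  have hcont : ContinuousOn g (Ioi 0) :=
    fun r hr => (hgderiv r hr).continuousAt.continuousWithinAt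
  have hmono : StrictMonoOn (fun r => g r * r) (Ioi 0) := by
    refine strictMonoOn_mul_id_of_one_add_mul_deriv_div_pos (g' := g') (convex_Ioi 0) hcont ?_ ?_ ?_
    all_goals rwa [interior_Ioi]
  have h_strictMono : StrictMono h := h_eq ▸ strictMono_abs_mul_of_strictMonoOn_Ioi hgpos hmono
  exact ⟨h_strictMono, fun _ _ hne => sub_mul_sub_pos_of_strictMono h_strictMono hne⟩

/-- For `g` satisfying the structural growth condition with `lim_{r→0⁺} r g(r) = 0`,
the function `h(t) = g(|t|) t` (extended by `h(0) = 0`) is strictly increasing on `ℝ`;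
equivalently, `(h(ξ) - h(ζ))(ξ - ζ) > 0` for all `ξ ≠ ζ`. -/
theorem h_strict_monotone (gs gS : ℝ) (hgs : 0 < gs) (hgsS : gs ≤ gS)
    (g g' : ℝ → ℝ)
    (hgpos : ∀ r : ℝ, 0 < r → 0 < g r)
    (hgderiv : ∀ r : ℝ, 0 < r → HasDerivAt g (g' r) r)
    (hlow : ∀ r : ℝ, 0 < r → gs ≤ 1 + r * g' r / g r)
    (hupp : ∀ r : ℝ, 0 < r → 1 + r * g' r / g r ≤ gS)
    (hlim : Filter.Tendsto (fun r : ℝ => r * g r) (nhdsWithin 0 (Set.Ioi 0)) (nhds 0))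
    (h : ℝ → ℝ) (hh : ∀ t : ℝ, t ≠ 0 → h t = g |t| * t) (hh0 : h 0 = 0) :
    StrictMono h ∧ ∀ ξ ζ : ℝ, ξ ≠ ζ → 0 < (h ξ - h ζ) * (ξ - ζ) := by
  exact h_strict_monotone_general hgpos hgderiv (fun r hr => hgs.trans_le (hlow r hr)) hh hh0
end

section
/- Let d ≥ 1, 0 < s < 1, let Ω ⊂ ℝ^d be a bounded measurable set, and let g : ℝ^d × ℝ^d × (0,∞) → (0,∞) be jointly measurable such that for almost every (x,y) the map r ↦ g(x,y,r) is differentiable with g_* ≤ 1 + r ∂_r g(x,y,r)/g(x,y,r) ≤ g^* for all r > 0 (with 0 < g_* ≤ g^*) and lim_{r→0⁺} r g(x,y,r) = 0; set h(x,y,t) = g(x,y,|t|) t for t ≠ 0 and h(x,y,0) = 0. Let u, v : ℝ^d → ℝ be measurable with u = v = 0 a.e. on ℝ^d ∖ Ω and set w = u − v, w⁺ = max(w, 0). Then the integrand (x,y) ↦ [ h(x,y, δ^s u(x,y)) − h(x,y, δ^s v(x,y)) ] · δ^s w⁺(x,y) · |x − y|^{−d} is nonnegative for a.e. (x,y), so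 the double integral ⟨𝓛_g^s u − 𝓛_g^s v, w⁺⟩ = ∫_{ℝ^d}∫_{ℝ^d} [ h(x,y, δ^s u) − h(x,y, δ^s v) ] δ^s w⁺ |x − y|^{−d} dx dy ∈ [0, ∞] is well defined and nonnegative; moreover, if w⁺ is not equal to 0 almost everywhere, then this integral is strictly positive. -/
open MeasureTheory

/-- Euclidean space `ℝ^d`. -/
abbrev Ed (d : ℕ) : Type := EuclideanSpace ℝ (Fin d)

/-- The fractional difference quotient `δ^s u(x,y) = (u(x) - u(y))/|x-y|^s`. -/
noncomputable def deltaS {d : ℕ} (s : ℝ) (u : Ed d → ℝ) (x y : Ed d) : ℝ :=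
  (u x - u y) / ‖x - y‖ ^ s

/-!
Testing `𝓛_g^s u - 𝓛_g^s v` against `φ (u - v)` with `φ` nondecreasing gives a pointwise nonnegative
integrand: since `δ^s u - δ^s v = δ^s (u - v)` and `h x y` is nondecreasing, the two factors have
the same sign. The lower growth bound makes the derivative of `r ↦ g r * r` positive, so
`h x y` is even strictly increasing. Then the integrand is positive wherever `u > v` at `x` and
`u ≤ v` at `y`, and this is a product of two non-null sets: the second one contains almost all of
the complement of the bounded set `Ω`.
-/

open Set

/-- The odd extension `t ↦ G |t| * t` of `r ↦ G r * r` from `(0, ∞)` to `ℝ`; applied to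
`G = g(x,y,·)` it is the paper's `h(x,y,·)`. Its value at `0` is `0`, whatever `G 0` is. -/
def oddExtension (G : ℝ → ℝ) (t : ℝ) : ℝ := G |t| * t

theorem eq_oddExtension {G H : ℝ → ℝ} (hH : ∀ t, t ≠ 0 → H t = G |t| * t) (hH0 : H 0 = 0) :
    H = oddExtension G := by
  ext t
  obtain rfl | ht := eq_or_ne t 0
  · rw [hH0, oddExtension, mul_zero]
  · exact hH t ht

theorem oddExtension_neg (G : ℝ → ℝ) (t : ℝ) : oddExtension G (-t) = -oddExtension G t := by
  rw [oddExtension, oddExtension, abs_neg, mul_neg]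

theorem oddExtension_of_nonneg (G : ℝ → ℝ) {t : ℝ} (ht : 0 ≤ t) : oddExtension G t = G t * t := by
  rw [oddExtension, abs_of_nonneg ht]

theorem strictMonoOn_mul_id {G G' : ℝ → ℝ} (hpos : ∀ r, 0 < r → 0 < G r)
    (hderiv : ∀ r, 0 < r → HasDerivAt G (G' r) r)
    (hgrowth : ∀ r, 0 < r → 0 < 1 + r * G' r / G r) :
    StrictMonoOn (fun r ↦ G r * r) (Ioi 0) := by
  have hprod : ∀ r, 0 < r → HasDerivAt (fun r ↦ G r * r) (G r * (1 + r * G' r / G r)) r := by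
    intro r hr
    have hG : G r ≠ 0 := (hpos r hr).ne'
    have hfactor : G' r * r + G r * 1 = G r * (1 + r * G' r / G r) := by
      field_simp
      ring
    exact hfactor ▸ (hderiv r hr).mul (hasDerivAt_id r)
  refine strictMonoOn_of_deriv_pos (convex_Ioi 0)
    (fun r hr ↦ (hprod r hr).continuousAt.continuousWithinAt) fun r hr ↦ ?_
  rw [interior_Ioi] at hr
  rw [(hprod r hr).deriv]
  exact mul_pos (hpos r hr) (hgrowth r hr)

theorem strictMono_oddExtension {G : ℝ → ℝ} (hpos : ∀ r, 0 < r → 0 < G r)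
    (hmono : StrictMonoOn (fun r ↦ G r * r) (Ioi 0)) :
    StrictMono (oddExtension G) := by
  refine strictMono_of_odd_strictMonoOn_nonneg (oddExtension_neg G) fun a ha b hb hab ↦ ?_
  rw [oddExtension_of_nonneg G ha, oddExtension_of_nonneg G hb]
  obtain rfl | ha : 0 = a ∨ 0 < a := eq_or_lt_of_le ha
  · rw [mul_zero]
    exact mul_pos (hpos b hab) hab
  · exact hmono ha (ha.trans hab) hab

theorem measurable_oddExtension {X Y : Type*} [MeasurableSpace X] [MeasurableSpace Y]
    {g : X → Y → ℝ → ℝ} (hg : Measurable fun q : X × Y × ℝ ↦ g q.1 q.2.1 q.2.2) :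
    Measurable fun q : X × Y × ℝ ↦ oddExtension (g q.1 q.2.1) q.2.2 := by
  have habs : Measurable fun q : X × Y × ℝ ↦ (q.1, q.2.1, |q.2.2|) := by fun_prop
  exact (hg.comp habs).mul (by fun_prop)

theorem frequently_ae_prod {X Y : Type*} [MeasurableSpace X] [MeasurableSpace Y] {μ : Measure X}
    {ν : Measure Y} [SFinite ν] {p : X → Prop} {q : Y → Prop}
    (hp : ∃ᵐ x ∂μ, p x) (hq : ∃ᵐ y ∂ν, q y) : ∃ᵐ z ∂μ.prod ν, p z.1 ∧ q z.2 := by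
  rw [frequently_ae_iff] at hp hq ⊢
  change (μ.prod ν) ({x | p x} ×ˢ {y | q y}) ≠ 0
  rw [Measure.prod_prod]
  exact mul_ne_zero hp hq

theorem lintegral_pos_of_frequently_pos {X : Type*} [MeasurableSpace X] {μ : Measure X}
    {f : X → ENNReal} (hf : AEMeasurable f μ) (hpos : ∃ᵐ x ∂μ, 0 < f x) : 0 < ∫⁻ x, f x ∂μ := by
  rw [pos_iff_ne_zero, Ne, lintegral_eq_zero_iff' hf]
  exact fun hzero ↦ hpos (hzero.mono fun x hx ↦ hx.not_gt)

theorem frequently_ae_notMem_of_isBounded {E : Type*} [NormedAddCommGroup E] [ProperSpace E]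
    [NoncompactSpace E] [MeasurableSpace E] [BorelSpace E] (μ : Measure E) [μ.IsAddHaarMeasure]
    {S : Set E} (hS : Bornology.IsBounded S) : ∃ᵐ x ∂μ, x ∉ S := by
  intro hmem
  have huniv : μ univ ≤ μ S := measure_mono_ae (hmem.mono fun x hx _ ↦ not_not.1 hx)
  rw [measure_univ_of_isAddLeftInvariant, top_le_iff] at huniv
  exact hS.measure_lt_top.ne huniv

section DifferenceQuotient

variable {d : ℕ} (s : ℝ)

theorem deltaS_sub_deltaS (u v : Ed d → ℝ) (x y : Ed d) :
    deltaS s u x y - deltaS s v x y = deltaS s (fun z ↦ u z - v z) x y := by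
  simp only [deltaS]
  ring

theorem deltaS_nonneg {w : Ed d → ℝ} {x y : Ed d} (hw : w y ≤ w x) : 0 ≤ deltaS s w x y :=
  div_nonneg (sub_nonneg.2 hw) (by positivity)

theorem deltaS_nonpos {w : Ed d → ℝ} {x y : Ed d} (hw : w x ≤ w y) : deltaS s w x y ≤ 0 :=
  div_nonpos_of_nonpos_of_nonneg (sub_nonpos.2 hw) (by positivity)

theorem deltaS_pos {w : Ed d → ℝ} {x y : Ed d} (hw : w y < w x) : 0 < deltaS s w x y := by
  have hxy : x - y ≠ 0 := sub_ne_zero.2 (ne_of_apply_ne w hw.ne')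
  exact div_pos (sub_pos.2 hw) (by positivity)

theorem measurable_deltaS {u : Ed d → ℝ} (hu : Measurable u) :
    Measurable fun p : Ed d × Ed d ↦ deltaS s u p.1 p.2 := by
  unfold deltaS
  fun_prop

end DifferenceQuotient

section Pairing

variable {d : ℕ} (s α : ℝ) {h : Ed d → Ed d → ℝ → ℝ} {u v : Ed d → ℝ}

/-- The integrand of the duality pairing `⟨𝓛_g^s u - 𝓛_g^s v, ζ⟩` as a function of the pair
`(x, y)`. The exponent `α` of the singular weight is the dimension `d` in the paper. -/
noncomputable def pairingIntegrand (h : Ed d → Ed d → ℝ → ℝ) (u v ζ : Ed d → ℝ)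
    (p : Ed d × Ed d) : ℝ :=
  (h p.1 p.2 (deltaS s u p.1 p.2) - h p.1 p.2 (deltaS s v p.1 p.2)) * deltaS s ζ p.1 p.2 /
    ‖p.1 - p.2‖ ^ α

theorem measurable_pairingIntegrand
    (hh : Measurable fun q : Ed d × Ed d × ℝ ↦ h q.1 q.2.1 q.2.2)
    (hu : Measurable u) (hv : Measurable v) {ζ : Ed d → ℝ} (hζ : Measurable ζ) :
    Measurable (pairingIntegrand s α h u v ζ) := by
  have hflux {f : Ed d → ℝ} (hf : Measurable f) :
      Measurable fun p : Ed d × Ed d ↦ h p.1 p.2 (deltaS s f p.1 p.2) :=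
    hh.comp (measurable_fst.prodMk (measurable_snd.prodMk (measurable_deltaS s hf)))
  exact (((hflux hu).sub (hflux hv)).mul (measurable_deltaS s hζ)).div (by fun_prop)

variable {φ : ℝ → ℝ} {p : Ed d × Ed d}

theorem pairingIntegrand_comp_sub_nonneg (hh : Monotone (h p.1 p.2)) (hφ : Monotone φ) :
    0 ≤ pairingIntegrand s α h u v (fun z ↦ φ (u z - v z)) p := by
  refine div_nonneg ?_ (by positivity)
  obtain hw | hw := le_total (u p.2 - v p.2) (u p.1 - v p.1)
  · have hδ : 0 ≤ deltaS s u p.1 p.2 - deltaS s v p.1 p.2 := by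
      rw [deltaS_sub_deltaS]
      exact deltaS_nonneg s hw
    exact mul_nonneg (sub_nonneg.2 (hh (sub_nonneg.1 hδ))) (deltaS_nonneg s (hφ hw))
  · have hδ : deltaS s u p.1 p.2 - deltaS s v p.1 p.2 ≤ 0 := by
      rw [deltaS_sub_deltaS]
      exact deltaS_nonpos s hw
    exact mul_nonneg_of_nonpos_of_nonpos (sub_nonpos.2 (hh (sub_nonpos.1 hδ)))
      (deltaS_nonpos s (hφ hw))

theorem pairingIntegrand_comp_sub_pos (hh : StrictMono (h p.1 p.2)) (hφ : Monotone φ)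
    (hlt : φ (u p.2 - v p.2) < φ (u p.1 - v p.1)) :
    0 < pairingIntegrand s α h u v (fun z ↦ φ (u z - v z)) p := by
  have hw : u p.2 - v p.2 < u p.1 - v p.1 := hφ.reflect_lt hlt
  have hxy : p.1 - p.2 ≠ 0 := by
    refine sub_ne_zero.2 fun heq ↦ hlt.ne ?_
    rw [heq]
  have hδ : 0 < deltaS s u p.1 p.2 - deltaS s v p.1 p.2 := by
    rw [deltaS_sub_deltaS]
    exact deltaS_pos s hw
  exact div_pos (mul_pos (sub_pos.2 (hh (sub_pos.1 hδ))) (deltaS_pos s hlt)) (by positivity)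

theorem strict_T_monotonicity_general (μ : Measure (Ed d)) [SFinite μ]
    (hh : Measurable fun q : Ed d × Ed d × ℝ ↦ h q.1 q.2.1 q.2.2)
    (hmono : ∀ᵐ p ∂μ.prod μ, StrictMono (h p.1 p.2))
    (hu : Measurable u) (hv : Measurable v) (hle : ∃ᵐ x ∂μ, u x ≤ v x) :
    (∀ᵐ p ∂μ.prod μ, 0 ≤ pairingIntegrand s α h u v (fun z ↦ max (u z - v z) 0) p) ∧
    (¬ ((fun z ↦ max (u z - v z) 0) =ᵐ[μ] fun _ ↦ (0 : ℝ)) →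
      0 < ∫⁻ p, ENNReal.ofReal (pairingIntegrand s α h u v (fun z ↦ max (u z - v z) 0) p)
        ∂μ.prod μ) := by
  have hφ : Monotone fun t : ℝ ↦ max t 0 := monotone_id.max monotone_const
  refine ⟨hmono.mono fun p hp ↦ pairingIntegrand_comp_sub_nonneg s α hp.monotone hφ, fun hne ↦ ?_⟩
  have hlt : ∃ᵐ x ∂μ, v x < u x := fun hnot ↦
    hne (hnot.mono fun x hx ↦ max_eq_right (sub_nonpos.2 (not_lt.1 hx)))
  refine lintegral_pos_of_frequently_pos (measurable_pairingIntegrand s α hh hu hv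
    ((hu.sub hv).max measurable_const)).ennreal_ofReal.aemeasurable ?_
  refine ((frequently_ae_prod hlt hle).and_eventually hmono).mono ?_
  rintro p ⟨⟨hx, hy⟩, hp⟩
  refine ENNReal.ofReal_pos.2 (pairingIntegrand_comp_sub_pos s α hp hφ ?_)
  rw [max_eq_right (sub_nonpos.2 hy)]
  exact lt_max_of_lt_left (sub_pos.2 hx)

end Pairing

/-- Strict T-monotonicity of the nonlocal nonlinear anisotropic g-Laplacian: with
`h(x,y,t) = g(x,y,|t|) t` (extended by `0` at `t = 0`) and `w⁺ = (u - v)⁺`, the integrand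
`(h(x,y,δ^s u) - h(x,y,δ^s v)) δ^s w⁺ |x-y|^{-d}` is a.e. nonnegative, so the double
integral `⟨𝓛_g^s u - 𝓛_g^s v, w⁺⟩ ∈ [0,∞]` is well defined and nonnegative; moreover it is
strictly positive when `w⁺` is not a.e. zero. -/
theorem strict_T_monotonicity
    (d : ℕ) (hd : 1 ≤ d) (s : ℝ) (hs0 : 0 < s) (hs1 : s < 1)
    (gs gS : ℝ) (hgs : 0 < gs) (hgsS : gs ≤ gS)
    (Ω : Set (Ed d)) (hΩm : MeasurableSet Ω) (hΩb : Bornology.IsBounded Ω)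
    (g g' : Ed d → Ed d → ℝ → ℝ)
    (hgmeas : Measurable (fun p : Ed d × Ed d × ℝ => g p.1 p.2.1 p.2.2))
    (hgae : ∀ᵐ p : Ed d × Ed d,
      (∀ r : ℝ, 0 < r → 0 < g p.1 p.2 r ∧ HasDerivAt (g p.1 p.2) (g' p.1 p.2 r) r ∧
        gs ≤ 1 + r * g' p.1 p.2 r / g p.1 p.2 r ∧ 1 + r * g' p.1 p.2 r / g p.1 p.2 r ≤ gS) ∧
      Filter.Tendsto (fun r : ℝ => r * g p.1 p.2 r) (nhdsWithin 0 (Set.Ioi 0)) (nhds 0))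
    (h : Ed d → Ed d → ℝ → ℝ)
    (hh : ∀ (x y : Ed d) (t : ℝ), t ≠ 0 → h x y t = g x y |t| * t)
    (hh0 : ∀ x y : Ed d, h x y 0 = 0)
    (u v : Ed d → ℝ) (hu : Measurable u) (hv : Measurable v)
    (hu0 : ∀ᵐ x : Ed d, x ∉ Ω → u x = 0)
    (hv0 : ∀ᵐ x : Ed d, x ∉ Ω → v x = 0) :
    (∀ᵐ p : Ed d × Ed d,
      0 ≤ (h p.1 p.2 (deltaS s u p.1 p.2) - h p.1 p.2 (deltaS s v p.1 p.2)) *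
        deltaS s (fun z => max (u z - v z) 0) p.1 p.2 / ‖p.1 - p.2‖ ^ (d : ℝ)) ∧
    (¬ ((fun z => max (u z - v z) 0) =ᵐ[volume] (fun _ => (0 : ℝ))) →
      0 < ∫⁻ p : Ed d × Ed d,
        ENNReal.ofReal ((h p.1 p.2 (deltaS s u p.1 p.2) - h p.1 p.2 (deltaS s v p.1 p.2)) *
          deltaS s (fun z => max (u z - v z) 0) p.1 p.2 / ‖p.1 - p.2‖ ^ (d : ℝ))) := by
  have : Nonempty (Fin d) := ⟨⟨0, hd⟩⟩
  obtain rfl : h = fun x y ↦ oddExtension (g x y) :=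
    funext₂ fun x y ↦ eq_oddExtension (hh x y) (hh0 x y)
  have hmono : ∀ᵐ p : Ed d × Ed d, StrictMono (oddExtension (g p.1 p.2)) := by
    filter_upwards [hgae] with p ⟨hp, _⟩
    have hpos : ∀ r, 0 < r → 0 < g p.1 p.2 r := fun r hr ↦ (hp r hr).1
    exact strictMono_oddExtension hpos <| strictMonoOn_mul_id hpos
      (fun r hr ↦ (hp r hr).2.1) fun r hr ↦ hgs.trans_le (hp r hr).2.2.1
  have hle : ∃ᵐ x : Ed d, u x ≤ v x := by
    refine ((frequently_ae_notMem_of_isBounded volume hΩb).and_eventually (hu0.and hv0)).mono ?_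
    rintro x ⟨hx, hux, hvx⟩
    rw [hux hx, hvx hx]
  exact strict_T_monotonicity_general (h := fun x y ↦ oddExtension (g x y)) s d volume
    (measurable_oddExtension hgmeas) hmono hu hv hle
end

section
/- Let d ≥ 1, 0 < s < 1, 0 < g_* ≤ g^*, and let G : ℝ^d × ℝ^d × [0,∞) → [0,∞) be jointly measurable with G(x,y,0) = 0 such that for almost every (x,y) the map r ↦ G(x,y,r) is differentiable on (0,∞) with nondecreasing derivative ḡ(x,y,·) ≥ 0 satisfying (1 + g_*) G(x,y,r) ≤ r ḡ(x,y,r) ≤ (1 + g^*) G(x,y,r) for all r > 0. Let Ψ : ℝ → ℝ be Lipschitz with constant λ > 0 and Ψ(0) = 0, and let v : ℝ^d → ℝ be measurable. Then, as (possibly infinite) integrals of nonnegative functions, ∫_{ℝ^d}∫_{ℝ^d} G(x,y, |Ψ(v(x)) − Ψ(v(y))| / |x−y|^s) |x−y|^{−d} dx dy ≤ (g^* + 1)/(g_* + 1) · ∫_{ℝ^d}∫_{ℝ^d} G(x,y, λ |v(x) − v(y)| / |x−y|^s) |x−y|^{−d} dx dy. -/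
open MeasureTheory

/-!
The factor `(g^* + 1) / (g_* + 1)` is at least `1`, and the estimate holds pointwise with constant
`1`: the Lipschitz bound compares the arguments of `G x y`, and `G x y` is nondecreasing on
`[0, ∞)`. On `(0, ∞)` this is the sign of the derivative. At `0`, where `G x y` need not be
continuous, it is `G x y r ≥ 0`, which follows from `0 ≤ r * ḡ x y r ≤ (1 + g^*) * G x y r`.
-/

theorem monotoneOn_Ici_zero_of_mul_deriv_le {f f' : ℝ → ℝ} {C : ℝ} (hC : 0 < C) (hf0 : f 0 ≤ 0)
    (hf : ∀ r, 0 < r → HasDerivAt f (f' r) r) (hf' : ∀ r, 0 < r → 0 ≤ f' r)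
    (hgrowth : ∀ r, 0 < r → r * f' r ≤ C * f r) :
    MonotoneOn f (Set.Ici 0) := by
  have hf_nonneg : ∀ r, 0 < r → 0 ≤ f r := fun r hr =>
    nonneg_of_mul_nonneg_right ((mul_nonneg hr.le (hf' r hr)).trans (hgrowth r hr)) hC
  have monotoneOn_Ioi : MonotoneOn f (Set.Ioi 0) :=
    monotoneOn_of_hasDerivWithinAt_nonneg (convex_Ioi 0)
      (fun r hr => (hf r hr).continuousAt.continuousWithinAt)
      (fun r hr => (hf r (interior_subset hr)).hasDerivWithinAt)
      (fun r hr => hf' r (interior_subset hr))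
  rw [← Set.Ioi_insert, Set.monotoneOn_insert_iff]
  exact ⟨fun r hr hr0 => absurd hr hr0.not_gt, fun r hr _ => hf0.trans (hf_nonneg r hr),
    monotoneOn_Ioi⟩

theorem lipschitz_composition_modular_general {E F F' : Type*} [NormedAddCommGroup E]
    [MeasurableSpace E] [PseudoMetricSpace F] [PseudoMetricSpace F'] {μ : Measure (E × E)}
    {G : E → E → ℝ → ℝ} (hG : ∀ᵐ p ∂μ, MonotoneOn (G p.1 p.2) (Set.Ici 0))
    {Ψ : F → F'} {K : NNReal} (hΨ : LipschitzWith K Ψ) (v : E → F) (s n : ℝ) :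
    ∫⁻ p, ENNReal.ofReal
        (G p.1 p.2 (dist (Ψ (v p.1)) (Ψ (v p.2)) / ‖p.1 - p.2‖ ^ s) / ‖p.1 - p.2‖ ^ n) ∂μ ≤
      ∫⁻ p, ENNReal.ofReal
        (G p.1 p.2 (K * dist (v p.1) (v p.2) / ‖p.1 - p.2‖ ^ s) / ‖p.1 - p.2‖ ^ n) ∂μ := by
  refine lintegral_mono_ae (hG.mono fun p hG_mono => ?_)
  have quotient_le : dist (Ψ (v p.1)) (Ψ (v p.2)) / ‖p.1 - p.2‖ ^ s ≤
      K * dist (v p.1) (v p.2) / ‖p.1 - p.2‖ ^ s := by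
    gcongr
    exact hΨ.dist_le_mul _ _
  gcongr
  exact hG_mono (Set.mem_Ici.2 (by positivity)) (Set.mem_Ici.2 (by positivity)) quotient_le

/-- Modular estimate for Lipschitz compositions: if `Ψ` is Lipschitz with constant `λ > 0`
and `Ψ(0) = 0`, then
`Γ_{s,G}(Ψ ∘ v) ≤ (g^*+1)/(g_*+1) · Γ_{s,G}(λ v)` as integrals of nonnegative functions,
where `Γ_{s,G}(w) = ∫∫ G(x, y, |w(x)-w(y)|/|x-y|^s) |x-y|^{-d} dx dy`. -/
theorem lipschitz_composition_modular
    (d : ℕ) (hd : 1 ≤ d) (s : ℝ) (hs0 : 0 < s) (hs1 : s < 1)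
    (gs gS : ℝ) (hgs : 0 < gs) (hgsS : gs ≤ gS)
    (G gbar : Ed d → Ed d → ℝ → ℝ)
    (hGmeas : Measurable (fun p : Ed d × Ed d × ℝ => G p.1 p.2.1 p.2.2))
    (hG0 : ∀ x y : Ed d, G x y 0 = 0)
    (hGae : ∀ᵐ p : Ed d × Ed d,
      (∀ r : ℝ, 0 < r → HasDerivAt (G p.1 p.2) (gbar p.1 p.2 r) r ∧ 0 ≤ gbar p.1 p.2 r ∧
        (1 + gs) * G p.1 p.2 r ≤ r * gbar p.1 p.2 r ∧
        r * gbar p.1 p.2 r ≤ (1 + gS) * G p.1 p.2 r) ∧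
      MonotoneOn (gbar p.1 p.2) (Set.Ioi 0))
    (Ψ : ℝ → ℝ) (lam : ℝ) (hlam : 0 < lam)
    (hΨ : ∀ a b : ℝ, |Ψ a - Ψ b| ≤ lam * |a - b|) (hΨ0 : Ψ 0 = 0)
    (v : Ed d → ℝ) (hv : Measurable v) :
    (∫⁻ p : Ed d × Ed d,
        ENNReal.ofReal (G p.1 p.2 (|Ψ (v p.1) - Ψ (v p.2)| / ‖p.1 - p.2‖ ^ s) /
          ‖p.1 - p.2‖ ^ (d : ℝ))) ≤
      ENNReal.ofReal ((gS + 1) / (gs + 1)) *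
        ∫⁻ p : Ed d × Ed d,
          ENNReal.ofReal (G p.1 p.2 (lam * |v p.1 - v p.2| / ‖p.1 - p.2‖ ^ s) /
            ‖p.1 - p.2‖ ^ (d : ℝ)) := by
  have hG_mono : ∀ᵐ p : Ed d × Ed d, MonotoneOn (G p.1 p.2) (Set.Ici 0) := by
    filter_upwards [hGae] with p ⟨hp, _⟩
    exact monotoneOn_Ici_zero_of_mul_deriv_le (C := 1 + gS) (by linarith) (hG0 p.1 p.2).le
      (fun r hr => (hp r hr).1) (fun r hr => (hp r hr).2.1) (fun r hr => (hp r hr).2.2.2)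
  have one_le_ratio : 1 ≤ ENNReal.ofReal ((gS + 1) / (gs + 1)) := by
    rw [ENNReal.one_le_ofReal, one_le_div (by linarith)]
    linarith
  have hΨ_lipschitz : LipschitzWith ⟨lam, hlam.le⟩ Ψ := .of_dist_le_mul hΨ
  exact (lipschitz_composition_modular_general hG_mono hΨ_lipschitz v s d).trans
    (le_mul_of_one_le_left zero_le one_le_ratio)
end

section
/- Let d ≥ 1, 0 < s < 1, 0 < g_* ≤ g^*, and let G : ℝ^d × ℝ^d × [0,∞) → [0,∞) be jointly measurable with G(x,y,0) = 0 such that for almost every (x,y) the map r ↦ G(x,y,r) is differentiable on (0,∞) with nondecreasing derivative ḡ(x,y,r) = g(x,y,r)·r ≥ 0 satisfying (1 + g_*) G(x,y,r) ≤ r ḡ(x,y,r) ≤ (1 + g^*) G(x,y,r) for all r > 0. Let v : ℝ^d → ℝ be measurable and k ≥ 0. Then the integrand (x,y) ↦ g(x,y, |δ^s v(x,y)|) · δ^s v(x,y) · δ^s (P_k ∘ v)(x,y) · |x−y|^{−d} is nonnegative a.e., and, as (possibly infinite) integrals of nonnegative functions, (g_* + 1) · ∫_{ℝ^d}∫_{ℝ^d}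 G(x,y, |δ^s (P_k ∘ v)(x,y)|) |x−y|^{−d} dx dy ≤ ∫_{ℝ^d}∫_{ℝ^d} g(x,y, |δ^s v(x,y)|) δ^s v(x,y) δ^s (P_k ∘ v)(x,y) |x−y|^{−d} dx dy. -/
open MeasureTheory

/-- The truncation at level `k`: `T_k(t) = max(-k, min(k, t))`. -/
noncomputable def Tk (k t : ℝ) : ℝ := max (-k) (min k t)

/-- The complement of the truncation: `P_k(t) = t - T_k(t)`. -/
noncomputable def Pk (k t : ℝ) : ℝ := t - Tk k t

/-!
Both `T_k` and `P_k = id - T_k` are monotone and `1`-Lipschitz. Hence `a = δ^s v` and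
`b = δ^s (P_k ∘ v)` have the same sign and `|b| ≤ |a|`, so that, `ḡ` being nondecreasing,
`g(|a|) a b = ḡ(|a|) |b| ≥ ḡ(|b|) |b| ≥ (1 + g_*) G(|b|)` pointwise. Integrating against a
nonnegative kernel gives the estimate.
-/

section Truncation

theorem monotone_sub_of_lipschitzWith_one {T : ℝ → ℝ} (hT : LipschitzWith 1 T) :
    Monotone fun t => t - T t := by
  intro a b hab
  have h : T b - T a ≤ b - a := by
    simpa [Real.dist_eq, abs_of_nonneg (sub_nonneg.2 hab)] using
      (le_abs_self _).trans (hT.dist_le_mul b a)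
  linarith

theorem lipschitzWith_one_of_monotone_sub {P : ℝ → ℝ} (hP : Monotone P)
    (hP' : Monotone fun t => t - P t) : LipschitzWith 1 P := by
  refine LipschitzWith.of_le_add fun a b => ?_
  rw [Real.dist_eq]
  rcases le_total a b with hab | hba
  · linarith [hP hab, abs_nonneg (a - b)]
  · linarith [hP' hba, le_abs_self (a - b)]

variable (k : ℝ)

theorem monotone_Tk : Monotone (Tk k) :=
  monotone_const.max (monotone_const.min monotone_id)

theorem lipschitzWith_one_Tk : LipschitzWith 1 (Tk k) :=
  (LipschitzWith.id.const_min k).const_max (-k)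

theorem monotone_Pk : Monotone (Pk k) :=
  monotone_sub_of_lipschitzWith_one (lipschitzWith_one_Tk k)

theorem lipschitzWith_one_Pk : LipschitzWith 1 (Pk k) :=
  lipschitzWith_one_of_monotone_sub (monotone_Pk k) <| by
    simpa only [Pk, sub_sub_cancel] using monotone_Tk k

end Truncation

/-- The difference `u(x) - u(y)` scaled by a weight `c(x,y)`. The quotient `δ^s u` is the case
`c(x,y) = |x-y|^{-s}`. -/
def weightedDiff {E : Type*} (c : E → E → ℝ) (u : E → ℝ) (x y : E) : ℝ :=
  (u x - u y) * c x y

section WeightedDiff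

variable {E : Type*} {P : ℝ → ℝ} (c : E → E → ℝ) (u : E → ℝ) (x y : E)

theorem weightedDiff_mul_weightedDiff_comp_nonneg (hP : Monotone P) :
    0 ≤ weightedDiff c u x y * weightedDiff c (fun z => P (u z)) x y := by
  have hmono : 0 ≤ (u x - u y) * (P (u x) - P (u y)) :=
    (monotone_id.monovary hP).sub_mul_sub_nonneg (u y) (u x)
  calc 0 ≤ (u x - u y) * (P (u x) - P (u y)) * (c x y * c x y) :=
        mul_nonneg hmono (mul_self_nonneg _)
    _ = weightedDiff c u x y * weightedDiff c (fun z => P (u z)) x y := mul_mul_mul_comm ..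

theorem abs_weightedDiff_comp_le (hP : LipschitzWith 1 P) :
    |weightedDiff c (fun z => P (u z)) x y| ≤ |weightedDiff c u x y| := by
  have hlip : |P (u x) - P (u y)| ≤ |u x - u y| := by
    simpa [Real.dist_eq] using hP.dist_le_mul (u x) (u y)
  simpa only [weightedDiff, abs_mul] using mul_le_mul_of_nonneg_right hlip (abs_nonneg (c x y))

end WeightedDiff

/-- The lower half of the growth condition (2.2): on `(0,∞)` the function `G` is a primitive of a
nonnegative nondecreasing `ḡ(r) = g(r) r`, with `G(0) = 0` and `p G(r) ≤ r ḡ(r)`. In the notation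
of the paper `p = 1 + g_*`; for `G(r) = r^p / p` the last inequality is an equality. -/
structure HasLowerGrowth (p : ℝ) (G g : ℝ → ℝ) : Prop where
  map_zero : G 0 = 0
  hasDerivAt : ∀ r, 0 < r → HasDerivAt G (g r * r) r
  deriv_nonneg : ∀ r, 0 < r → 0 ≤ g r * r
  monotoneOn : MonotoneOn (fun r => g r * r) (Set.Ioi 0)
  mul_map_le : ∀ r, 0 < r → p * G r ≤ r * (g r * r)

namespace HasLowerGrowth

variable {p a b : ℝ} {G g : ℝ → ℝ}

theorem mul_mul_nonneg (h : HasLowerGrowth p G g) (hab : 0 ≤ a * b) : 0 ≤ g |a| * a * b := by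
  rcases eq_or_ne a 0 with rfl | ha
  · simp
  · have hpos : 0 < |a| := abs_pos.2 ha
    have hg : 0 ≤ g |a| := nonneg_of_mul_nonneg_left (h.deriv_nonneg _ hpos) hpos
    simpa only [mul_assoc] using mul_nonneg hg hab

theorem mul_map_abs_le (h : HasLowerGrowth p G g) (hab : 0 ≤ a * b) (hba : |b| ≤ |a|) :
    p * G |b| ≤ g |a| * a * b := by
  rcases eq_or_ne b 0 with rfl | hb
  · simp [h.map_zero]
  · have hpos : 0 < |b| := abs_pos.2 hb
    have hmono : g |b| * |b| ≤ g |a| * |a| := h.monotoneOn hpos (hpos.trans_le hba) hba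
    calc p * G |b| ≤ |b| * (g |b| * |b|) := h.mul_map_le _ hpos
      _ ≤ |b| * (g |a| * |a|) := by gcongr
      _ = g |a| * |a * b| := by rw [abs_mul]; ring
      _ = g |a| * a * b := by rw [abs_of_nonneg hab, mul_assoc]

end HasLowerGrowth

theorem truncation_estimate_general {E : Type*} [MeasurableSpace E] {μ : Measure (E × E)}
    {c w : E → E → ℝ} (hw : ∀ x y, 0 ≤ w x y) {p : ℝ} (hp : 0 ≤ p) {G g : E → E → ℝ → ℝ}
    (hG : ∀ᵐ z ∂μ, HasLowerGrowth p (G z.1 z.2) (g z.1 z.2))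
    {P : ℝ → ℝ} (hP : Monotone P) (hP' : LipschitzWith 1 P) (v : E → ℝ) :
    (∀ᵐ z ∂μ, 0 ≤ g z.1 z.2 |weightedDiff c v z.1 z.2| * weightedDiff c v z.1 z.2 *
      weightedDiff c (fun x => P (v x)) z.1 z.2 * w z.1 z.2) ∧
    ENNReal.ofReal p *
      (∫⁻ z, ENNReal.ofReal
        (G z.1 z.2 |weightedDiff c (fun x => P (v x)) z.1 z.2| * w z.1 z.2) ∂μ) ≤
      ∫⁻ z, ENNReal.ofReal (g z.1 z.2 |weightedDiff c v z.1 z.2| * weightedDiff c v z.1 z.2 *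
        weightedDiff c (fun x => P (v x)) z.1 z.2 * w z.1 z.2) ∂μ := by
  have hsign (z : E × E) := weightedDiff_mul_weightedDiff_comp_nonneg c v z.1 z.2 hP
  constructor
  · filter_upwards [hG] with z hz
    exact mul_nonneg (hz.mul_mul_nonneg (hsign z)) (hw _ _)
  · rw [← lintegral_const_mul' _ _ ENNReal.ofReal_ne_top]
    refine lintegral_mono_ae ?_
    filter_upwards [hG] with z hz
    rw [← ENNReal.ofReal_mul hp, ← mul_assoc]
    exact ENNReal.ofReal_le_ofReal <| mul_le_mul_of_nonneg_right
      (hz.mul_map_abs_le (hsign z) (abs_weightedDiff_comp_le c v z.1 z.2 hP')) (hw _ _)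

/-- Truncation estimate: the integrand
`g(x,y,|δ^s v|) δ^s v δ^s(P_k ∘ v) |x-y|^{-d}` is a.e. nonnegative and
`(g_*+1) Γ_{s,G}(P_k(v)) ≤ ⟨𝓛_g^s v, P_k(v)⟩` as integrals of nonnegative functions. -/
theorem truncation_estimate
    (d : ℕ) (hd : 1 ≤ d) (s : ℝ) (hs0 : 0 < s) (hs1 : s < 1)
    (gs gS : ℝ) (hgs : 0 < gs) (hgsS : gs ≤ gS)
    (G g gbar : Ed d → Ed d → ℝ → ℝ)
    (hGmeas : Measurable (fun p : Ed d × Ed d × ℝ => G p.1 p.2.1 p.2.2))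
    (hgmeas : Measurable (fun p : Ed d × Ed d × ℝ => g p.1 p.2.1 p.2.2))
    (hG0 : ∀ x y : Ed d, G x y 0 = 0)
    (hgbar : ∀ (x y : Ed d) (r : ℝ), gbar x y r = g x y r * r)
    (hGae : ∀ᵐ p : Ed d × Ed d,
      (∀ r : ℝ, 0 < r → HasDerivAt (G p.1 p.2) (gbar p.1 p.2 r) r ∧ 0 ≤ gbar p.1 p.2 r ∧
        (1 + gs) * G p.1 p.2 r ≤ r * gbar p.1 p.2 r ∧
        r * gbar p.1 p.2 r ≤ (1 + gS) * G p.1 p.2 r) ∧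
      MonotoneOn (gbar p.1 p.2) (Set.Ioi 0))
    (v : Ed d → ℝ) (hv : Measurable v) (k : ℝ) (hk : 0 ≤ k) :
    (∀ᵐ p : Ed d × Ed d,
      0 ≤ g p.1 p.2 |deltaS s v p.1 p.2| * deltaS s v p.1 p.2 *
        deltaS s (fun z => Pk k (v z)) p.1 p.2 / ‖p.1 - p.2‖ ^ (d : ℝ)) ∧
    ENNReal.ofReal (gs + 1) *
      (∫⁻ p : Ed d × Ed d,
        ENNReal.ofReal (G p.1 p.2 |deltaS s (fun z => Pk k (v z)) p.1 p.2| /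
          ‖p.1 - p.2‖ ^ (d : ℝ))) ≤
      ∫⁻ p : Ed d × Ed d,
        ENNReal.ofReal (g p.1 p.2 |deltaS s v p.1 p.2| * deltaS s v p.1 p.2 *
          deltaS s (fun z => Pk k (v z)) p.1 p.2 / ‖p.1 - p.2‖ ^ (d : ℝ)) := by
  have hG : ∀ᵐ z : Ed d × Ed d, HasLowerGrowth (gs + 1) (G z.1 z.2) (g z.1 z.2) := by
    filter_upwards [hGae] with z ⟨hz, hmono⟩
    simp only [add_comm 1 gs, funext (hgbar z.1 z.2)] at hz hmono
    exact ⟨hG0 _ _, fun r hr => (hz r hr).1, fun r hr => (hz r hr).2.1, hmono,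
      fun r hr => (hz r hr).2.2.1⟩
  exact truncation_estimate_general (c := fun x y => (‖x - y‖ ^ s)⁻¹)
    (w := fun x y => (‖x - y‖ ^ (d : ℝ))⁻¹) (fun _ _ => by positivity) (by linarith) hG
    (monotone_Pk k) (lipschitzWith_one_Pk k) v
end

section
/- Let d ≥ 1, 0 < s < 1, 0 < g_* ≤ g^*, 0 < γ_* ≤ γ^*, and let g : ℝ^d × ℝ^d × (0,∞) → (0,∞) be jointly measurable such that for almost every (x,y) the map r ↦ g(x,y,r) is differentiable with g_* ≤ 1 + r ∂_r g(x,y,r)/g(x,y,r) ≤ g^* and γ_* ≤ g(x,y,r) ≤ γ^* for all r > 0; set h(x,y,t) = g(x,y,|t|) t for t ≠ 0 and h(x,y,0) = 0. Then for all measurable u, v : ℝ^d → ℝ the integrand (x,y) ↦ [ h(x,y, δ^s u) − h(x,y, δ^s v) ] · δ^s(u − v) · |x−y|^{−d} is nonnegative a.e., and, as (possibly infinite) integrals of nonnegative functions, ∫_{ℝ^d}∫_{ℝ^d} [ h(x,y, δ^s u) − h(x,y, δ^s v) ] δ^s(u − v) |x−y|^{−d} dx dy ≥ γ_* g_* ∫_{ℝ^d}∫_{ℝ^d}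 |(u−v)(x) − (u−v)(y)|² / |x−y|^{d+2s} dx dy. -/
open MeasureTheory

/-! Write `h(t) = g(|t|) t`. For `t > 0` the growth condition says
`h'(t) = g(t) (1 + t g'(t) / g(t)) ≥ γ_* g_* =: c`, so `t ↦ h(t) - c t` is increasing on `(0, ∞)`.
Since `h ≥ 0` there, the values of `h(t) - c t` near `0` are at least `-c t → 0`, so monotonicity
extends to `t = 0`, and then to all of `ℝ` by oddness. Hence
`c (a - b)² ≤ (h(a) - h(b)) (a - b)`, which at `a = δ^s u`, `b = δ^s v` is the asserted inequality
between the integrands. -/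

open Set Filter Topology

section Flux

/-- The odd flux `h(t) = g(|t|) t` of a kernel `g` defined on `(0, ∞)`. The value of `g` at `0` is
irrelevant, since `flux g 0 = 0`. -/
def flux (g : ℝ → ℝ) (t : ℝ) : ℝ := g |t| * t

variable {g g' h : ℝ → ℝ} {c r γ a : ℝ}

theorem eq_flux (hne : ∀ t, t ≠ 0 → h t = g |t| * t) (h0 : h 0 = 0) : h = flux g := by
  funext t
  rcases eq_or_ne t 0 with rfl | ht
  · simp [flux, h0]
  · exact hne t ht

theorem flux_zero (g : ℝ → ℝ) : flux g 0 = 0 := mul_zero _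

theorem flux_neg (g : ℝ → ℝ) (t : ℝ) : flux g (-t) = -flux g t := by
  simp only [flux, abs_neg, mul_neg]

theorem flux_of_pos (g : ℝ → ℝ) (hr : 0 < r) : flux g r = g r * r := by
  rw [flux, abs_of_pos hr]

theorem hasDerivAt_flux {m : ℝ} (hr : 0 < r) (hg : HasDerivAt g m r) :
    HasDerivAt (flux g) (g r + r * m) r := by
  have hmul : HasDerivAt (fun t ↦ g t * t) (m * r + g r * 1) r := hg.mul (hasDerivAt_id r)
  rw [show g r + r * m = m * r + g r * 1 by ring]
  refine hmul.congr_of_eventuallyEq ?_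
  filter_upwards [lt_mem_nhds hr] with t ht using flux_of_pos g ht

theorem monotoneOn_Ioi_flux_sub_mul (hg : ∀ r, 0 < r → HasDerivAt g (g' r) r)
    (hc : ∀ r, 0 < r → c ≤ g r + r * g' r) :
    MonotoneOn (fun t ↦ flux g t - c * t) (Ioi 0) := by
  have hderiv : ∀ t ∈ Ioi (0 : ℝ),
      HasDerivAt (fun t ↦ flux g t - c * t) (g t + t * g' t - c * 1) t := fun t ht ↦
    (hasDerivAt_flux ht (hg t ht)).sub ((hasDerivAt_id t).const_mul c)
  refine monotoneOn_of_hasDerivWithinAt_nonneg (convex_Ioi 0)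
    (fun t ht ↦ (hderiv t ht).continuousAt.continuousWithinAt)
    (fun t ht ↦ (hderiv t (interior_subset ht)).hasDerivWithinAt) fun t ht ↦ ?_
  linarith [hc t (interior_subset ht)]

theorem mul_le_flux (hmono : MonotoneOn (fun t ↦ flux g t - c * t) (Ioi 0))
    (hnonneg : ∀ r, 0 < r → 0 ≤ g r) (hr : 0 < r) : c * r ≤ flux g r := by
  have hlower : ∀ᶠ ε in 𝓝[>] (0 : ℝ), -(c * ε) ≤ flux g r - c * r := by
    filter_upwards [Ioo_mem_nhdsGT hr] with ε hε
    have hflux : 0 ≤ flux g ε := by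
      rw [flux_of_pos g hε.1]
      exact mul_nonneg (hnonneg ε hε.1) hε.1.le
    have hεr : flux g ε - c * ε ≤ flux g r - c * r := hmono hε.1 hr hε.2.le
    linarith
  have hlim : Tendsto (fun ε ↦ -(c * ε)) (𝓝[>] (0 : ℝ)) (𝓝 0) :=
    Continuous.tendsto' (by fun_prop) 0 0 (by simp) |>.mono_left nhdsWithin_le_nhds
  exact sub_nonneg.mp (le_of_tendsto hlim hlower)

theorem monotone_flux_sub_mul (hg : ∀ r, 0 < r → HasDerivAt g (g' r) r)
    (hnonneg : ∀ r, 0 < r → 0 ≤ g r) (hc : ∀ r, 0 < r → c ≤ g r + r * g' r) :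
    Monotone (fun t ↦ flux g t - c * t) := by
  have hpos := monotoneOn_Ioi_flux_sub_mul hg hc
  refine monotone_of_odd_of_monotoneOn_nonneg (fun t ↦ by rw [flux_neg]; ring) ?_
  rw [← Ioi_insert, monotoneOn_insert_iff]
  refine ⟨fun t ht ht0 ↦ absurd ht0 (not_le.mpr ht), fun t ht _ ↦ ?_, hpos⟩
  simpa only [flux_zero, mul_zero, sub_zero, sub_nonneg] using mul_le_flux hpos hnonneg ht

theorem mul_sq_le_flux_sub_mul_sub (hg : ∀ r, 0 < r → HasDerivAt g (g' r) r)
    (hnonneg : ∀ r, 0 < r → 0 ≤ g r) (hc : ∀ r, 0 < r → c ≤ g r + r * g' r) (a b : ℝ) :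
    c * (a - b) ^ 2 ≤ (flux g a - flux g b) * (a - b) := by
  have hvary : Monovary (fun t ↦ flux g t - c * t) id :=
    (monotone_flux_sub_mul hg hnonneg hc).monovary monotone_id
  have hprod := monovary_iff_forall_mul_nonneg.mp hvary b a
  simp only [id_eq] at hprod
  linear_combination hprod

theorem mul_le_add_mul_of_le_one_add_div {x y : ℝ} (ha : 0 ≤ a) (hγ : 0 < γ) (hγx : γ ≤ x)
    (hay : a ≤ 1 + r * y / x) : γ * a ≤ x + r * y := by
  have hx : 0 < x := hγ.trans_le hγx
  calc γ * a ≤ x * (1 + r * y / x) := by gcongr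
    _ = x + r * y := by field_simp

end Flux

section Densities

variable {E : Type*} [NormedAddCommGroup E]

/-- The fractional difference quotient `δ^s u(x,y) = (u(x) - u(y)) / |x - y|^s` on a normed group;
`deltaS` is its instance on `ℝ^d`. It is meaningful for `x ≠ y` only; on the diagonal it takes the
junk value `0`. -/
noncomputable def fracDiffQuot (s : ℝ) (u : E → ℝ) (x y : E) : ℝ :=
  (u x - u y) / ‖x - y‖ ^ s

/-- The integrand of the Gagliardo seminorm `[w]²_{s,2}`, with `n` in place of the dimension. -/
noncomputable def gagliardoDensity (n s : ℝ) (w : E → ℝ) (x y : E) : ℝ :=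
  |w x - w y| ^ 2 / ‖x - y‖ ^ (n + 2 * s)

/-- The integrand of `⟨𝓛_g^s u - 𝓛_g^s v, u - v⟩`, with `n` in place of the dimension. -/
noncomputable def pairingDensity (n s : ℝ) (g : E → E → ℝ → ℝ) (u v : E → ℝ) (x y : E) : ℝ :=
  (flux (g x y) (fracDiffQuot s u x y) - flux (g x y) (fracDiffQuot s v x y)) *
    fracDiffQuot s (fun z ↦ u z - v z) x y / ‖x - y‖ ^ n

variable {x y : E}

theorem gagliardoDensity_nonneg (n s : ℝ) (w : E → ℝ) (x y : E) :
    0 ≤ gagliardoDensity n s w x y := by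
  unfold gagliardoDensity
  positivity

theorem fracDiffQuot_sub (s : ℝ) (u v : E → ℝ) (x y : E) :
    fracDiffQuot s (fun z ↦ u z - v z) x y = fracDiffQuot s u x y - fracDiffQuot s v x y := by
  unfold fracDiffQuot
  ring

theorem gagliardoDensity_eq_sq_fracDiffQuot_div (n s : ℝ) (w : E → ℝ) (hxy : x ≠ y) :
    gagliardoDensity n s w x y = fracDiffQuot s w x y ^ 2 / ‖x - y‖ ^ n := by
  have hpos : 0 < ‖x - y‖ := norm_sub_pos_iff.mpr hxy
  rw [gagliardoDensity, fracDiffQuot, sq_abs, Real.rpow_add hpos, div_pow, div_div, mul_comm 2 s,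
    Real.rpow_mul hpos.le, Real.rpow_two, mul_comm]

theorem mul_gagliardoDensity_le_pairingDensity {g : E → E → ℝ → ℝ} {g' : ℝ → ℝ} {c : ℝ}
    (n s : ℝ) (u v : E → ℝ) (hxy : x ≠ y) (hg : ∀ r, 0 < r → HasDerivAt (g x y) (g' r) r)
    (hnonneg : ∀ r, 0 < r → 0 ≤ g x y r) (hc : ∀ r, 0 < r → c ≤ g x y r + r * g' r) :
    c * gagliardoDensity n s (fun z ↦ u z - v z) x y ≤ pairingDensity n s g u v x y := by
  rw [gagliardoDensity_eq_sq_fracDiffQuot_div n s _ hxy, pairingDensity, fracDiffQuot_sub,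
    ← mul_div_assoc]
  exact div_le_div_of_nonneg_right (mul_sq_le_flux_sub_mul_sub hg hnonneg hc _ _) (by positivity)

end Densities

section Measure

theorem ae_prod_fst_ne_snd {α : Type*} [MeasurableSpace α] [MeasurableEq α] (μ ν : Measure α)
    [NullSingletonClass ν] : ∀ᵐ p ∂μ.prod ν, p.1 ≠ p.2 := by
  have hslice : ∀ x, Prod.mk x ⁻¹' diagonal α = {x} := fun x ↦ by
    ext y
    exact eq_comm
  have hdiag : μ.prod ν (diagonal α) = 0 :=
    Measure.measure_prod_null_of_ae_null measurableSet_diagonal <| .of_forall fun x ↦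
      (congrArg ν (hslice x)).trans (measure_singleton x)
  exact measure_eq_zero_iff_ae_notMem.mp hdiag

theorem ofReal_mul_lintegral_le_of_ae_le {α : Type*} [MeasurableSpace α] {μ : Measure α}
    {f F : α → ℝ} {c : ℝ} (hc : 0 ≤ c) (hle : ∀ᵐ x ∂μ, c * f x ≤ F x) :
    ENNReal.ofReal c * ∫⁻ x, ENNReal.ofReal (f x) ∂μ ≤ ∫⁻ x, ENNReal.ofReal (F x) ∂μ := by
  rw [← lintegral_const_mul' _ _ ENNReal.ofReal_ne_top]
  refine lintegral_mono_ae (hle.mono fun x hx ↦ ?_)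
  rw [← ENNReal.ofReal_mul hc]
  exact ENNReal.ofReal_le_ofReal hx

end Measure

theorem coercivity_hilbertian_general {E : Type*} [NormedAddCommGroup E] [MeasurableSpace E]
    {μ : Measure (E × E)} (hμ : ∀ᵐ p ∂μ, p.1 ≠ p.2) (n s : ℝ) {gs γs : ℝ} (hgs : 0 ≤ gs)
    (hγs : 0 < γs) {g g' : E → E → ℝ → ℝ}
    (hg : ∀ᵐ p ∂μ, ∀ r, 0 < r → HasDerivAt (g p.1 p.2) (g' p.1 p.2 r) r ∧
      gs ≤ 1 + r * g' p.1 p.2 r / g p.1 p.2 r ∧ γs ≤ g p.1 p.2 r)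
    (u v : E → ℝ) :
    (∀ᵐ p ∂μ, 0 ≤ pairingDensity n s g u v p.1 p.2) ∧
    ENNReal.ofReal (γs * gs) *
      ∫⁻ p, ENNReal.ofReal (gagliardoDensity n s (fun z ↦ u z - v z) p.1 p.2) ∂μ ≤
      ∫⁻ p, ENNReal.ofReal (pairingDensity n s g u v p.1 p.2) ∂μ := by
  have hc : 0 ≤ γs * gs := mul_nonneg hγs.le hgs
  have hdensity : ∀ᵐ p ∂μ, γs * gs * gagliardoDensity n s (fun z ↦ u z - v z) p.1 p.2 ≤
      pairingDensity n s g u v p.1 p.2 := by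
    filter_upwards [hμ, hg] with p hne hp
    exact mul_gagliardoDensity_le_pairingDensity n s u v hne (fun r hr ↦ (hp r hr).1)
      (fun r hr ↦ hγs.le.trans (hp r hr).2.2)
      fun r hr ↦ mul_le_add_mul_of_le_one_add_div hgs hγs (hp r hr).2.2 (hp r hr).2.1
  exact ⟨hdensity.mono fun p hp ↦ (mul_nonneg hc (gagliardoDensity_nonneg ..)).trans hp,
    ofReal_mul_lintegral_le_of_ae_le hc hdensity⟩

/-- Strict coercivity in the Hilbertian case `0 < γ_* ≤ g ≤ γ^*`: the integrand of
`⟨𝓛_g^s u - 𝓛_g^s v, u - v⟩` is a.e. nonnegative and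
`⟨𝓛_g^s u - 𝓛_g^s v, u - v⟩ ≥ γ_* g_* [u - v]²_{s,2}`
as integrals of nonnegative functions. -/
theorem coercivity_hilbertian
    (d : ℕ) (hd : 1 ≤ d) (s : ℝ) (hs0 : 0 < s) (hs1 : s < 1)
    (gs gS γs γS : ℝ) (hgs : 0 < gs) (hgsS : gs ≤ gS) (hγs : 0 < γs) (hγsS : γs ≤ γS)
    (g g' : Ed d → Ed d → ℝ → ℝ)
    (hgmeas : Measurable (fun p : Ed d × Ed d × ℝ => g p.1 p.2.1 p.2.2))
    (hgae : ∀ᵐ p : Ed d × Ed d, ∀ r : ℝ, 0 < r →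
      HasDerivAt (g p.1 p.2) (g' p.1 p.2 r) r ∧
      gs ≤ 1 + r * g' p.1 p.2 r / g p.1 p.2 r ∧
      1 + r * g' p.1 p.2 r / g p.1 p.2 r ≤ gS ∧
      γs ≤ g p.1 p.2 r ∧ g p.1 p.2 r ≤ γS)
    (h : Ed d → Ed d → ℝ → ℝ)
    (hh : ∀ (x y : Ed d) (t : ℝ), t ≠ 0 → h x y t = g x y |t| * t)
    (hh0 : ∀ x y : Ed d, h x y 0 = 0)
    (u v : Ed d → ℝ) (hu : Measurable u) (hv : Measurable v) :
    (∀ᵐ p : Ed d × Ed d,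
      0 ≤ (h p.1 p.2 (deltaS s u p.1 p.2) - h p.1 p.2 (deltaS s v p.1 p.2)) *
        deltaS s (fun z => u z - v z) p.1 p.2 / ‖p.1 - p.2‖ ^ (d : ℝ)) ∧
    ENNReal.ofReal (γs * gs) *
      (∫⁻ p : Ed d × Ed d,
        ENNReal.ofReal (|(u p.1 - v p.1) - (u p.2 - v p.2)| ^ 2 /
          ‖p.1 - p.2‖ ^ ((d : ℝ) + 2 * s))) ≤
      ∫⁻ p : Ed d × Ed d,
        ENNReal.ofReal ((h p.1 p.2 (deltaS s u p.1 p.2) - h p.1 p.2 (deltaS s v p.1 p.2)) *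
          deltaS s (fun z => u z - v z) p.1 p.2 / ‖p.1 - p.2‖ ^ (d : ℝ)) := by
  obtain rfl : h = fun x y ↦ flux (g x y) :=
    funext₂ fun x y ↦ eq_flux (hh x y) (hh0 x y)
  have : NeZero d := ⟨by lia⟩
  exact coercivity_hilbertian_general (ae_prod_fst_ne_snd volume volume) d s hgs.le hγs
    (hgae.mono fun p hp r hr ↦ ⟨(hp r hr).1, (hp r hr).2.1, (hp r hr).2.2.2.1⟩) u v
end
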